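/- Let n ≥ 1, let σ² > 0 and λ > 0 be real numbers, let V ∈ ℝ^{n×n} be an orthogonal matrix, let D ∈ ℝ^{n×n} be diagonal with nonnegative diagonal entries d₁,…,dₙ, and set P_λ = λ V D Vᵀ and S = P_λ(P_λ + σ²I)⁻¹. Then for every integer ν ≥ 1, the boosting kernel satisfies P_ν := σ²(I − S)^{−ν} − σ²I = σ² V [ ((λD + σ²I)/σ²)^ν − I ] Vᵀ; in particular its (i,i)-th eigenvalue (the prior variance assigned by boosting to the i-th direction) is σ²(λdᵢ/σ² + 1)^ν − σ². -/

import Mathlib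

open Matrix

/-!
Since `P + σ²I` is invertible, the residual operator is `I − S = σ²(P + σ²I)⁻¹`, so
`(I − S)⁻¹ = (P + σ²I)/σ²` is affine in `P` and the boosting kernel is a polynomial in `P`.
The boosting kernel moreover commutes with every change of basis, so it suffices to compute it in
the eigenbasis of `P`, where every matrix involved is diagonal.
-/

theorem diagonal_add_smul_one {ι R : Type*} [DecidableEq ι] [Semiring R] (p : ι → R) (c : R) :
    diagonal p + c • 1 = diagonal fun i => p i + c := by
  rw [smul_one_eq_diagonal, diagonal_add]

section Smoother

variable {ι R : Type*} [Fintype ι] [DecidableEq ι] [CommRing R]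

theorem inv_units_conj (V : (Matrix ι ι R)ˣ) (A : Matrix ι ι R) :
    (V.val * A * V⁻¹.val)⁻¹ = V.val * A⁻¹ * V⁻¹.val := by
  rw [Matrix.mul_inv_rev, Matrix.mul_inv_rev, ← coe_units_inv V, ← coe_units_inv V⁻¹, inv_inv,
    Matrix.mul_assoc]

/-- The smoother `S = P (P + c I)⁻¹` of the regularized weak learner with output kernel matrix `P`
and noise variance `c`; the inverse is `0` when `P + c I` is singular. -/
noncomputable def smoother (c : R) (P : Matrix ι ι R) : Matrix ι ι R :=
  P * (P + c • 1)⁻¹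

/-- The boosting kernel `c (I - S)^{-ν} - c I` after `ν` iterations of the weak learner with
smoother `S = smoother c P`; the negative power is encoded as a power of the inverse, which is `0`
when `I - S` is singular. -/
noncomputable def boostingKernel (c : R) (P : Matrix ι ι R) (ν : ℕ) : Matrix ι ι R :=
  c • ((1 - smoother c P)⁻¹) ^ ν - c • 1

theorem one_sub_smoother {c : R} {P : Matrix ι ι R} (hP : IsUnit (P + c • 1)) :
    1 - smoother c P = c • (P + c • 1)⁻¹ := by
  have hcancel : (P + c • 1) * (P + c • 1)⁻¹ = 1 :=
    mul_nonsing_inv _ ((isUnit_iff_isUnit_det _).mp hP)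
  calc
    1 - smoother c P = (P + c • 1) * (P + c • 1)⁻¹ - P * (P + c • 1)⁻¹ := by rw [hcancel, smoother]
    _ = c • (P + c • 1)⁻¹ := by rw [← Matrix.sub_mul, add_sub_cancel_left, smul_one_mul]

theorem smoother_units_conj (c : R) (V : (Matrix ι ι R)ˣ) (P : Matrix ι ι R) :
    smoother c (V.val * P * V⁻¹.val) = V.val * smoother c P * V⁻¹.val := by
  have hreg : V.val * P * V⁻¹.val + c • 1 = V.val * (P + c • 1) * V⁻¹.val := by
    simp [Matrix.mul_add, Matrix.add_mul]
  rw [smoother, smoother, hreg, inv_units_conj]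
  simp only [Matrix.mul_assoc, Units.inv_mul_cancel_left]

theorem boostingKernel_units_conj (c : R) (V : (Matrix ι ι R)ˣ) (P : Matrix ι ι R) (ν : ℕ) :
    boostingKernel c (V.val * P * V⁻¹.val) ν = V.val * boostingKernel c P ν * V⁻¹.val := by
  have hres : 1 - V.val * smoother c P * V⁻¹.val = V.val * (1 - smoother c P) * V⁻¹.val := by
    simp [Matrix.mul_sub, Matrix.sub_mul]
  rw [boostingKernel, boostingKernel, smoother_units_conj, hres, inv_units_conj, Units.conj_pow]
  simp [Matrix.mul_sub, Matrix.sub_mul]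

end Smoother

section Spectral

variable {ι K : Type*} [Fintype ι] [DecidableEq ι] [Field K] {c : K}

theorem inv_one_sub_smoother (hc : c ≠ 0) {P : Matrix ι ι K} (hP : IsUnit (P + c • 1)) :
    (1 - smoother c P)⁻¹ = c⁻¹ • (P + c • 1) := by
  rw [one_sub_smoother hP]
  apply inv_eq_left_inv
  rw [smul_mul_smul_comm, inv_mul_cancel₀ hc, one_smul,
    mul_nonsing_inv _ ((isUnit_iff_isUnit_det _).mp hP)]

theorem boostingKernel_eq_smul_pow_sub_one (hc : c ≠ 0) {P : Matrix ι ι K}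
    (hP : IsUnit (P + c • 1)) (ν : ℕ) :
    boostingKernel c P ν = c • ((c⁻¹ • (P + c • 1)) ^ ν - 1) := by
  rw [boostingKernel, inv_one_sub_smoother hc hP, smul_sub]

theorem isUnit_diagonal_add_smul_one {p : ι → K} (hp : ∀ i, p i + c ≠ 0) :
    IsUnit (diagonal p + c • 1) := by
  rw [diagonal_add_smul_one, isUnit_diagonal, Pi.isUnit_iff]
  exact fun i => (hp i).isUnit

theorem boostingKernel_diagonal (hc : c ≠ 0) {p : ι → K} (hp : ∀ i, p i + c ≠ 0) (ν : ℕ) :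
    boostingKernel c (diagonal p) ν = diagonal fun i => c * (p i / c + 1) ^ ν - c := by
  have hinv : c⁻¹ • (diagonal p + c • 1) = diagonal fun i => p i / c + 1 := by
    rw [diagonal_add_smul_one, ← diagonal_smul]
    congr 1 with i
    simp only [Pi.smul_apply, smul_eq_mul]
    field_simp
  rw [boostingKernel_eq_smul_pow_sub_one hc (isUnit_diagonal_add_smul_one hp), hinv, diagonal_pow,
    ← diagonal_one, diagonal_sub, ← diagonal_smul]
  congr 1 with i
  simp only [Pi.smul_apply, Pi.pow_apply, smul_eq_mul, mul_sub, mul_one]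

theorem boosting_kernel_spectral_general (hc : c ≠ 0) (lam : K) (V : (Matrix ι ι K)ˣ) (d : ι → K)
    (hd : ∀ i, lam * d i + c ≠ 0) (ν : ℕ) :
    boostingKernel c (lam • (V.val * diagonal d * V⁻¹.val)) ν
        = c • (V.val * ((c⁻¹ • (lam • diagonal d + c • 1)) ^ ν - 1) * V⁻¹.val) ∧
      boostingKernel c (lam • (V.val * diagonal d * V⁻¹.val)) ν
        = V.val * diagonal (fun i => c * (lam * d i / c + 1) ^ ν - c) * V⁻¹.val := by
  have hconj : boostingKernel c (lam • (V.val * diagonal d * V⁻¹.val)) ν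
      = V.val * boostingKernel c (diagonal (lam • d)) ν * V⁻¹.val := by
    rw [← boostingKernel_units_conj, diagonal_smul, Matrix.mul_smul, Matrix.smul_mul]
  rw [hconj]
  constructor
  · rw [boostingKernel_eq_smul_pow_sub_one hc (isUnit_diagonal_add_smul_one (p := lam • d) hd),
      diagonal_smul, Matrix.mul_smul, Matrix.smul_mul]
  · rw [boostingKernel_diagonal (p := lam • d) hc hd]
    simp only [Pi.smul_apply, smul_eq_mul]

end Spectral

/-- Representation (BoostingKer2): with `P_λ = λVDVᵀ` (`V` orthogonal, `D`
diagonal with nonnegative entries) and `S = P_λ(P_λ + σ²I)⁻¹`, the boosting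
kernel is `σ²(I−S)^{−ν} − σ²I = σ² V[((λD + σ²I)/σ²)^ν − I]Vᵀ`; its diagonal
form has entries `σ²(λdᵢ/σ² + 1)^ν − σ²`. -/
theorem boosting_kernel_spectral {n : ℕ} (hn : 1 ≤ n) (σ2 lam : ℝ)
    (hσ2 : 0 < σ2) (hlam : 0 < lam)
    (V : Matrix (Fin n) (Fin n) ℝ) (hV : Vᵀ * V = 1)
    (d : Fin n → ℝ) (hd : ∀ i, 0 ≤ d i)
    (Pl S : Matrix (Fin n) (Fin n) ℝ)
    (hPl : Pl = lam • (V * Matrix.diagonal d * Vᵀ))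
    (hS : S = Pl * (Pl + σ2 • 1)⁻¹) :
    ∀ ν : ℕ, 1 ≤ ν →
      σ2 • ((1 - S)⁻¹) ^ ν - σ2 • 1
        = σ2 • (V * ((σ2⁻¹ • (lam • Matrix.diagonal d + σ2 • 1)) ^ ν - 1) * Vᵀ) ∧
      σ2 • ((1 - S)⁻¹) ^ ν - σ2 • 1
        = V * Matrix.diagonal (fun i => σ2 * (lam * d i / σ2 + 1) ^ ν - σ2) * Vᵀ := by
  have hreg : ∀ i, lam * d i + σ2 ≠ 0 := fun i => by have := hd i; positivity
  subst hPl hS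
  exact fun ν _ => boosting_kernel_spectral_general hσ2.ne' lam
    ⟨V, Vᵀ, mul_eq_one_comm.mp hV, hV⟩ d hreg ν
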